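/- Let A = ℚ[t₁, t₂] ⊗ Λ(v₁,…,v₅) with deg v₁ = deg v₂ = deg v₃ = 3 and deg v₄ = deg v₅ = 7, and let D be the unique derivation of degree +1 on A with D t₁ = D t₂ = 0, D v₁ = D v₂ = 0, D v₃ = t₂², D v₄ = v₁v₂t₁ + t₁⁴ and D v₅ = 0. Then D ∘ D = 0 and dim_ℚ H(A, D) < ∞. -/

import Mathlib

/-!
The polynomial generators are even cocycles, so `D` is linear over `R = ℚ[t₁, t₂]`
(`map_poly_smul`). On a product `v x` with `v` an odd generator the cross terms of `D²` cancel, so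
`D² = 0` follows from its vanishing on generators (`map_map_eq_zero`).

The algebra is a finite free `R`-module, because the exterior algebra is finite dimensional; as `R`
is Noetherian, the cocycles are finitely generated over `R`. Powers of both `tᵢ` annihilate the
cohomology: `t₂² = D v₃`, and since `(v₁v₂)² = 0`, multiplying `D v₄ = t₁⁴ + t₁v₁v₂` by the cocycle
`t₁⁴ - t₁v₁v₂` shows that `t₁⁸` is exact. Hence the cohomology is finitely generated over `R`
and killed by `t₁⁸` and `t₂²`, so it is finite dimensional over `ℚ`
(`finiteDimensional_cohomology`).
-/

/- D v₃ = t₂², D v₄ = v₁v₂t₁ + t₁⁴ on ℚ[t₁,t₂] ⊗ Λ(v₁,…,v₅), deg v = (3,3,3,7,7). -/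

open scoped TensorProduct

set_option synthInstance.maxHeartbeats 1000000
set_option maxHeartbeats 1000000

noncomputable section

/-- The free graded-commutative ℚ-algebra `ℚ[t₁,…,t_r] ⊗ Λ(v₁,…,v_n)`:
the tensor product of a polynomial algebra on `r` generators of degree 2 with
an exterior algebra on `n` generators of odd degrees. -/
abbrev FGCA (r n : ℕ) : Type :=
  MvPolynomial (Fin r) ℚ ⊗[ℚ] ExteriorAlgebra ℚ (Fin n → ℚ)

/-- The degree-2 polynomial generators `tᵢ`. -/
def tg (r n : ℕ) (i : Fin r) : FGCA r n := (MvPolynomial.X i) ⊗ₜ 1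

/-- The odd-degree exterior generators `vⱼ`. -/
def vg (r n : ℕ) (j : Fin n) : FGCA r n :=
  1 ⊗ₜ (ExteriorAlgebra.ι ℚ (Pi.single j (1 : ℚ)))

/-- The monomial `t^α · v_S` (with the exterior factors multiplied in increasing
order of index).  These monomials form a ℚ-basis of `FGCA r n`. -/
def gmon (r n : ℕ) (α : Fin r →₀ ℕ) (S : Finset (Fin n)) : FGCA r n :=
  (MvPolynomial.monomial α (1 : ℚ)) ⊗ₜ
    ((S.sort (· ≤ ·)).map fun j => ExteriorAlgebra.ι ℚ (Pi.single j (1 : ℚ))).prod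

/-- The (cohomological) degree of the monomial `t^α · v_S`, where each `tᵢ` has
degree `2` and each `vⱼ` has degree `dv j`. -/
def gdeg (r n : ℕ) (dv : Fin n → ℕ) (α : Fin r →₀ ℕ) (S : Finset (Fin n)) : ℕ :=
  (α.sum fun _ k => 2 * k) + S.sum dv

/-- The homogeneous part of degree `k` of `FGCA r n`: the span of the monomials
of degree `k`. -/
def homog (r n : ℕ) (dv : Fin n → ℕ) (k : ℕ) : Submodule ℚ (FGCA r n) :=
  Submodule.span ℚ { a | ∃ α S, gdeg r n dv α S = k ∧ a = gmon r n α S }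

/-- The graded Leibniz rule for a degree `+1` derivation `D`:
`D(ab) = D(a)·b + (−1)^(deg a) a·D(b)` for homogeneous `a`. -/
def IsLeibniz (r n : ℕ) (dv : Fin n → ℕ) (D : FGCA r n →ₗ[ℚ] FGCA r n) : Prop :=
  ∀ (p : ℕ) (a b : FGCA r n), a ∈ homog r n dv p →
    D (a * b) = D a * b + ((-1 : ℚ) ^ p) • (a * D b)

/-- `D` raises (cohomological) degree by `1`. -/
def RaisesDegByOne (r n : ℕ) (dv : Fin n → ℕ) (D : FGCA r n →ₗ[ℚ] FGCA r n) : Prop :=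
  ∀ (k : ℕ), ∀ a ∈ homog r n dv k, D a ∈ homog r n dv (k + 1)

/-- The cohomology `H(A, D) = ker D / im D` as a ℚ-vector space, realized as the
image of `ker D` in `A ⧸ im D`. -/
abbrev Cohomology (r n : ℕ) (D : FGCA r n →ₗ[ℚ] FGCA r n) : Type :=
  (LinearMap.ker D).map (LinearMap.range D).mkQ

end

/-- The exterior algebra of `ℚⁿ` is finite dimensional: the wedge monomials in a basis,
indexed by the finite subsets of the index set, form a basis of it. -/
instance exteriorAlgebra_finite (n : ℕ) : Module.Finite ℚ (ExteriorAlgebra ℚ (Fin n → ℚ)) :=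
  Module.Finite.of_basis (Pi.basisFun ℚ (Fin n)).ExteriorAlgebra

section General

variable {r n : ℕ} {d : Fin n → ℕ} {D : FGCA r n →ₗ[ℚ] FGCA r n}

lemma vg_mem_homog (j : Fin n) : vg r n j ∈ homog r n d (d j) :=
  Submodule.subset_span ⟨0, {j}, by simp [gdeg], by simp [gmon, vg]⟩

lemma tg_mem_homog (i : Fin r) : tg r n i ∈ homog r n d 2 :=
  Submodule.subset_span ⟨Finsupp.single i 1, ∅, by simp [gdeg], by
    simp [gmon, tg, MvPolynomial.X]⟩

lemma tg_mul (i : Fin r) (z : FGCA r n) :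
    tg r n i * z = (MvPolynomial.X i : MvPolynomial (Fin r) ℚ) • z := by
  exact (Algebra.smul_def (MvPolynomial.X i : MvPolynomial (Fin r) ℚ) z).symm

/-- Since the `tᵢ` are even cocycles, `D` is linear over the polynomial ring `ℚ[t₁,…,t_r]`. -/
lemma map_poly_smul (hL : IsLeibniz r n d D) (ht : ∀ i, D (tg r n i) = 0)
    (p : MvPolynomial (Fin r) ℚ) (z : FGCA r n) : D (p • z) = p • D z := by
  induction p using MvPolynomial.induction_on generalizing z with
  | C a =>
    have h : ∀ y : FGCA r n, (MvPolynomial.C a : MvPolynomial (Fin r) ℚ) • y = a • y :=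
      fun y => algebraMap_smul (MvPolynomial (Fin r) ℚ) a y
    rw [h, h, map_smul]
  | add p q hp hq => rw [add_smul, add_smul, map_add, hp, hq]
  | mul_X p i hp =>
    rw [mul_smul, hp, mul_smul, ← tg_mul, hL 2 _ _ (tg_mem_homog i), ht]
    simp [tg_mul]

lemma map_one_eq_zero (hL : IsLeibniz r n d D) : D 1 = 0 := by
  have h1 : (1 : FGCA r n) ∈ homog r n d 0 :=
    Submodule.subset_span ⟨0, ∅, by simp [gdeg], by
      simp [gmon, Algebra.TensorProduct.one_def]⟩
  simpa using hL 0 1 1 h1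

/-- For `v` of odd degree, the two cross terms of `D² (v x)` cancel. -/
lemma map_map_vg_mul (hL : IsLeibniz r n d D) (hdeg : RaisesDegByOne r n d D) (j : Fin n)
    (hodd : Odd (d j)) (x : FGCA r n) :
    D (D (vg r n j * x)) = D (D (vg r n j)) * x + vg r n j * D (D x) := by
  rw [hL _ _ _ (vg_mem_homog j), map_add, map_smul, hL _ _ _ (hdeg _ _ (vg_mem_homog j)),
    hL _ _ _ (vg_mem_homog j), hodd.add_one.neg_one_pow, hodd.neg_one_pow]
  module

/-- `D² = 0` as soon as it vanishes on the generators, the exterior ones having odd degree. -/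
lemma map_map_eq_zero (hL : IsLeibniz r n d D) (hdeg : RaisesDegByOne r n d D)
    (hodd : ∀ j, Odd (d j)) (ht : ∀ i, D (tg r n i) = 0)
    (hv : ∀ j, D (D (vg r n j)) = 0) (z : FGCA r n) : D (D z) = 0 := by
  have key : ∀ e : ExteriorAlgebra ℚ (Fin n → ℚ), D (D (1 ⊗ₜ e)) = 0 := by
    intro e
    induction e using CliffordAlgebra.left_induction with
    | algebraMap a =>
      have : (1 : MvPolynomial (Fin r) ℚ) ⊗ₜ[ℚ]
          (algebraMap ℚ (ExteriorAlgebra ℚ (Fin n → ℚ)) a) = a • (1 : FGCA r n) := by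
        rw [Algebra.algebraMap_eq_smul_one, TensorProduct.tmul_smul,
          Algebra.TensorProduct.one_def]
      refine (congrArg (fun y => D (D y)) this).trans ?_
      simp [map_one_eq_zero hL]
    | add x y hx hy =>
      rw [TensorProduct.tmul_add, map_add, map_add, hx, hy, add_zero]
    | ι_mul x m hx =>
      have : (1 : MvPolynomial (Fin r) ℚ) ⊗ₜ[ℚ] (ExteriorAlgebra.ι ℚ m * x)
          = ∑ j, m j • (vg r n j * (1 ⊗ₜ x)) := by
        conv_lhs => rw [← Finset.univ_sum_single m]
        simp only [map_sum, Finset.sum_mul, TensorProduct.tmul_sum, vg,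
          Algebra.TensorProduct.tmul_mul_tmul, one_mul]
        refine Finset.sum_congr rfl fun j _ => ?_
        have h : (Pi.single j (m j) : Fin n → ℚ) = m j • Pi.single j (1 : ℚ) := by
          rw [← Pi.single_smul, smul_eq_mul, mul_one]
        rw [h, map_smul, smul_mul_assoc, TensorProduct.tmul_smul]
      refine (congrArg (fun y => D (D y)) this).trans ?_
      simp [map_map_vg_mul hL hdeg _ (hodd _), hv, hx]
  induction z using TensorProduct.induction_on with
  | zero => simp
  | add x y hx hy => rw [map_add, map_add, hx, hy, add_zero]
  | tmul p e =>
    have : p ⊗ₜ[ℚ] e = p • ((1 : MvPolynomial (Fin r) ℚ) ⊗ₜ[ℚ] e) := by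
      rw [TensorProduct.smul_tmul', smul_eq_mul, mul_one]
    rw [this, map_poly_smul hL ht, map_poly_smul hL ht, key, smul_zero]

/-- The cocycles form a finitely generated module over the Noetherian ring `ℚ[t₁,…,t_r]`. If a
power of each `tᵢ` kills the cohomology, then the classes of the finitely many multiples of the
generators by monomials of bounded exponents already span the cohomology over `ℚ`. -/
lemma finiteDimensional_cohomology (hL : IsLeibniz r n d D) (ht : ∀ i, D (tg r n i) = 0)
    (N : Fin r → ℕ)
    (hN : ∀ i z, D z = 0 → (MvPolynomial.X i : MvPolynomial (Fin r) ℚ) ^ N i • z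
      ∈ LinearMap.range D) :
    FiniteDimensional ℚ (Cohomology r n D) := by
  let D' : FGCA r n →ₗ[MvPolynomial (Fin r) ℚ] FGCA r n :=
    { toFun := D, map_add' := map_add D, map_smul' := map_poly_smul hL ht }
  have hfin : Module.Finite (MvPolynomial (Fin r) ℚ) (FGCA r n) := inferInstance
  obtain ⟨S, hS⟩ := (isNoetherian_of_isNoetherianRing_of_finite
    (MvPolynomial (Fin r) ℚ) (FGCA r n)).noetherian (LinearMap.ker D')
  have hSD : ∀ s ∈ S, D s = 0 := fun s hs => by
    have : s ∈ LinearMap.ker D' := hS ▸ Submodule.subset_span hs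
    exact this
  let B : Finset (Fin r →₀ ℕ) := Finset.Iic (Finsupp.equivFunOnFinite.symm N)
  let F : Set (FGCA r n ⧸ LinearMap.range D) :=
    (fun q : (Fin r →₀ ℕ) × FGCA r n =>
      (LinearMap.range D).mkQ (MvPolynomial.monomial q.1 (1 : ℚ) • q.2)) '' (B ×ˢ S : Finset _)
  have hF : F.Finite := (Finset.finite_toSet _).image _
  have hmono : ∀ (α : Fin r →₀ ℕ) (s : FGCA r n), s ∈ S →
      (LinearMap.range D).mkQ (MvPolynomial.monomial α (1 : ℚ) • s) ∈ Submodule.span ℚ F := by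
    intro α s hs
    by_cases hα : α ∈ B
    · exact Submodule.subset_span ⟨(α, s), by simp [hα, hs], rfl⟩
    · have : ∃ i, N i ≤ α i := by
        by_contra! h
        exact hα (Finset.mem_Iic.2 fun i => (h i).le)
      obtain ⟨i, hi⟩ := this
      have hsplit : MvPolynomial.monomial α (1 : ℚ)
          = MvPolynomial.X i ^ N i * MvPolynomial.monomial (α - Finsupp.single i (N i)) 1 := by
        rw [MvPolynomial.X_pow_eq_monomial, MvPolynomial.monomial_mul, mul_one,
          add_tsub_cancel_of_le (Finsupp.single_le_iff.2 hi)]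
      have h0 : (LinearMap.range D).mkQ (MvPolynomial.monomial α (1 : ℚ) • s) = 0 := by
        rw [Submodule.mkQ_apply, Submodule.Quotient.mk_eq_zero, hsplit, mul_smul]
        exact hN i _ (by rw [map_poly_smul hL ht, hSD s hs, smul_zero])
      rw [h0]
      exact Submodule.zero_mem _
  have hle : (LinearMap.ker D).map (LinearMap.range D).mkQ ≤ Submodule.span ℚ F := by
    rintro _ ⟨z, hz, rfl⟩
    have hz' : z ∈ Submodule.span (MvPolynomial (Fin r) ℚ) (S : Set (FGCA r n)) := by
      rw [hS]; exact hz
    clear hz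
    induction hz' using Submodule.span_induction with
    | mem s hs => simpa using hmono 0 s hs
    | zero => rw [map_zero]; exact Submodule.zero_mem _
    | add x y _ _ hx hy => rw [map_add]; exact Submodule.add_mem _ hx hy
    | smul p x hx _ =>
      clear * - hx hmono
      induction hx using Submodule.span_induction generalizing p with
      | mem s hs =>
        induction p using MvPolynomial.induction_on' with
        | monomial α a =>
          have h : (MvPolynomial.monomial α a : MvPolynomial (Fin r) ℚ) • s
              = a • (MvPolynomial.monomial α (1 : ℚ) • s) := by
            rw [← smul_assoc, MvPolynomial.smul_monomial, smul_eq_mul, mul_one]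
          rw [h, map_smul]
          exact Submodule.smul_mem _ _ (hmono α s hs)
        | add p q hp hq => rw [add_smul, map_add]; exact Submodule.add_mem _ hp hq
      | zero => rw [smul_zero, map_zero]; exact Submodule.zero_mem _
      | add x y _ _ hx hy => rw [smul_add, map_add]; exact Submodule.add_mem _ (hx p) (hy p)
      | smul q x _ hx => rw [← mul_smul]; exact hx _
  have : FiniteDimensional ℚ (Submodule.span ℚ F) := FiniteDimensional.span_of_finite ℚ hF
  exact Submodule.finiteDimensional_of_le hle

lemma vg_mul_self (j : Fin n) : vg r n j * vg r n j = 0 := by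
  simp [vg, Algebra.TensorProduct.tmul_mul_tmul]

lemma vg_anticomm (i j : Fin n) : vg r n i * vg r n j + vg r n j * vg r n i = 0 := by
  simp only [vg, Algebra.TensorProduct.tmul_mul_tmul, ← TensorProduct.tmul_add,
    ExteriorAlgebra.ι_add_mul_swap, TensorProduct.tmul_zero]

lemma vg_mul_vg_sq (i j : Fin n) : vg r n i * vg r n j * (vg r n i * vg r n j) = 0 := by
  have h := congrArg (fun y => vg r n i * y * vg r n j) (vg_anticomm i j)
  simp only [mul_add, add_mul, mul_zero, zero_mul] at h
  rw [← mul_assoc (vg r n i) (vg r n i), vg_mul_self, zero_mul, zero_mul, zero_add] at h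
  simpa only [mul_assoc] using h

end General

noncomputable section

local notation "dv" => (![3, 3, 3, 7, 7] : Fin 5 → ℕ)
local notation "t₁" => tg 2 5 0
local notation "t₂" => tg 2 5 1
local notation "v₁" => vg 2 5 0
local notation "v₂" => vg 2 5 1
local notation "v₃" => vg 2 5 2
local notation "v₄" => vg 2 5 3
local notation "v₅" => vg 2 5 4

theorem stmt_3 (D : FGCA 2 5 →ₗ[ℚ] FGCA 2 5)
    (hLeib : IsLeibniz 2 5 dv D)
    (hdeg : RaisesDegByOne 2 5 dv D)
    (hD0 : D t₁ = (0 : FGCA 2 5))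
    (hD1 : D t₂ = (0 : FGCA 2 5))
    (hD2 : D v₁ = (0 : FGCA 2 5))
    (hD3 : D v₂ = (0 : FGCA 2 5))
    (hD4 : D v₅ = (0 : FGCA 2 5))
    (hD5 : D v₃ = t₂ ^ 2)
    (hD6 : D v₄ = v₁ * v₂ * t₁ + t₁ ^ 4)
    : D ∘ₗ D = 0 ∧ FiniteDimensional ℚ (Cohomology 2 5 D) := by
  have ht : ∀ i, D (tg 2 5 i) = 0 := Fin.forall_fin_two.2 ⟨hD0, hD1⟩
  have hL1 : ∀ z, D (v₁ * z) = (-1 : ℚ) • (v₁ * D z) := fun z => by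
    rw [hLeib _ _ _ (vg_mem_homog 0), hD2, zero_mul, zero_add]; norm_num
  have hL2 : ∀ z, D (v₂ * z) = (-1 : ℚ) • (v₂ * D z) := fun z => by
    rw [hLeib _ _ _ (vg_mem_homog 1), hD3, zero_mul, zero_add]; norm_num
  have hlin := map_poly_smul hLeib ht
  have hV : ∀ z, D (v₁ * v₂ * z) = v₁ * v₂ * D z := fun z => by
    rw [mul_assoc, hL1, hL2, mul_smul_comm, smul_smul, mul_assoc]; norm_num
  have hpow : ∀ (i : Fin 2) (k : ℕ), tg 2 5 i ^ k
      = (MvPolynomial.X i ^ k : MvPolynomial (Fin 2) ℚ) • (1 : FGCA 2 5) := fun i k => by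
    induction k with
    | zero => simp
    | succ k ih => rw [pow_succ', ih, tg_mul, ← mul_smul, pow_succ']
  have hone : D 1 = 0 := map_one_eq_zero hLeib
  have hcom : v₁ * v₂ * t₁ = (MvPolynomial.X 0 : MvPolynomial (Fin 2) ℚ) • (v₁ * v₂) := by
    rw [show t₁ = (MvPolynomial.X 0 : MvPolynomial (Fin 2) ℚ) • (1 : FGCA 2 5) by
      simpa using hpow 0 1, mul_smul_comm, mul_one]
  refine ⟨LinearMap.ext fun z => map_map_eq_zero hLeib hdeg (by decide) ht ?_ z, ?_⟩
  · intro j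
    fin_cases j
    · exact (congrArg D hD2).trans (map_zero D)
    · exact (congrArg D hD3).trans (map_zero D)
    · refine (congrArg D hD5).trans ?_
      rw [hpow, hlin, hone, smul_zero]
    · refine (congrArg D hD6).trans ?_
      rw [map_add, hV, hD0, hpow, hlin, hone, mul_zero, smul_zero, add_zero]
    · exact (congrArg D hD4).trans (map_zero D)
  · refine finiteDimensional_cohomology hLeib ht ![8, 2] (Fin.forall_fin_two.2 ⟨?_, ?_⟩)
    · intro z hz
      -- Multiply `D v₄ = t₁⁴ + t₁v₁v₂` by the conjugate `t₁⁴ - t₁v₁v₂`, using `(v₁v₂)² = 0`.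
      let c : FGCA 2 5 := (MvPolynomial.X 0 ^ 4 : MvPolynomial (Fin 2) ℚ) • z
        + (-1 : ℚ) • (MvPolynomial.X 0 : MvPolynomial (Fin 2) ℚ) • (v₁ * v₂ * z)
      have hc : D c = 0 := by
        simp only [c, map_add, map_smul, hlin, hV, hz, mul_zero, smul_zero, add_zero]
      refine ⟨v₄ * c, ?_⟩
      have hsq : v₁ * v₂ * (v₁ * v₂ * z) = 0 := by
        rw [← mul_assoc, vg_mul_vg_sq, zero_mul]
      rw [hLeib _ _ _ (vg_mem_homog 3), hc, mul_zero, smul_zero, add_zero, hD6, hcom, hpow]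
      simp only [c, add_mul, mul_add, smul_mul_assoc, mul_smul_comm, one_mul, hsq, smul_zero,
        smul_add, Matrix.cons_val_zero]
      module
    · intro z hz
      refine ⟨v₃ * z, ?_⟩
      rw [hLeib _ _ _ (vg_mem_homog 2), hD5, hz, hpow]
      simp

end
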